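/- The only partition λ such that both λ and λ' are 2-singular, λ is unbroken, and λ is a 4-core, is λ = (2,2). -/

import Mathlib

/-- A partition: weakly decreasing sequence of non-negative integers (indexed from 1,
with the convention `μ 0 = 0`), with finitely many nonzero terms. -/
def IsPartition (μ : ℕ → ℕ) : Prop :=
  μ 0 = 0 ∧ (∀ i, 1 ≤ i → μ (i + 1) ≤ μ i) ∧ ∃ N, ∀ i, N ≤ i → μ i = 0

/-- The conjugate partition: `conj μ j = |{i ≥ 1 : μ i ≥ j}|`. -/
noncomputable def conj (μ : ℕ → ℕ) (j : ℕ) : ℕ :=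
  Nat.card {i : ℕ // 1 ≤ i ∧ j ≤ μ i}

/-- `(i,j)` is a node of the Young diagram of `μ`. -/
def IsNode (μ : ℕ → ℕ) (i j : ℕ) : Prop := 1 ≤ i ∧ 1 ≤ j ∧ j ≤ μ i

/-- The hook length `h_μ(i,j) = 1 + μ_i - j + μ'_j - i` (as an integer). -/
noncomputable def hook (μ : ℕ → ℕ) (i j : ℕ) : ℤ :=
  1 + (μ i : ℤ) - (j : ℤ) + (conj μ j : ℤ) - (i : ℤ)

/-- `μ` is broken: there exist `1 < c < d` with `μ_{c-1} - μ_c > 1` and `μ_{d-1} = μ_d > 0`. -/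
def Broken (μ : ℕ → ℕ) : Prop :=
  ∃ c d : ℕ, 1 < c ∧ c < d ∧ μ c + 1 < μ (c - 1) ∧ μ (d - 1) = μ d ∧ 0 < μ d

/-- `μ` is 2-singular: some `μ_i = μ_{i+1} > 0` (with `i ≥ 1`). -/
def TwoSingular (μ : ℕ → ℕ) : Prop := ∃ i : ℕ, 1 ≤ i ∧ μ i = μ (i + 1) ∧ 0 < μ i

/-- `μ` is an `e`-core: no hook length is divisible by `e`. -/
def IsECore (e : ℕ) (μ : ℕ → ℕ) : Prop :=
  ∀ i j : ℕ, IsNode μ i j → ¬ (e : ℤ) ∣ hook μ i j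

/-- `μ` is an `e`-JM partition. -/
def IsJM (e : ℕ) (μ : ℕ → ℕ) : Prop :=
  ∀ i j : ℕ, IsNode μ i j → (e : ℤ) ∣ hook μ i j →
    (∀ k, 1 ≤ k → k ≤ μ i → (e : ℤ) ∣ hook μ i k) ∨
    (∀ k, 1 ≤ k → k ≤ conj μ j → (e : ℤ) ∣ hook μ k j)

/-!
Read a partition `μ` through its beta-numbers `μ i - i`, which decrease strictly. The set of
beta-numbers of an `e`-core is closed under subtracting `e`, since a missing value
`y < μ i - i` produces a hook of length `μ i - i - y` in row `i`.

Let `e = d + 2` and let row `i` exceed row `i + 1` by at least `d`; for `d = 2` such a drop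
amounts to two equal columns. With `x := μ i - i`, none of `x - 1, …, x - d` is a beta-number, so
the beta-numbers above `x` are congruent to `x` or `x + 1` modulo `e`. Two equal rows give
consecutive beta-numbers, which are at least `x` as `μ` is unbroken; hence `x + 1` is a
beta-number, and so are `x + 1 - e` and `x - e`. Therefore row `i - 1` equals row `i`, and rows
`i + 1` and `i + 2` are equal, hence zero as `μ` is unbroken. An earlier row `i - 2` would have a
beta-number at least `x + e`, so it would be followed by a drop and `μ` would be broken.
-/

theorem IsPartition.antitoneOn {μ : ℕ → ℕ} (hμ : IsPartition μ) : AntitoneOn μ (Set.Ici 1) :=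
  antitoneOn_nat_Ici_of_succ_le hμ.2.1

theorem conj_eq_of_forall_le_iff {μ : ℕ → ℕ} {j k : ℕ} (h : ∀ i, 1 ≤ i → (j ≤ μ i ↔ i ≤ k)) :
    conj μ j = k := by
  have mem_column (i : ℕ) : (1 ≤ i ∧ j ≤ μ i) ↔ i ∈ Finset.Icc 1 k := by
    rw [Finset.mem_Icc]
    exact and_congr_right (h i)
  rw [conj, Nat.card_congr (Equiv.subtypeEquivRight mem_column), Nat.card_eq_fintype_card,
    Fintype.card_coe, Nat.card_Icc, Nat.add_sub_cancel]

namespace IsPartition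

variable {μ : ℕ → ℕ} {i j : ℕ}

theorem le_conj_iff (hμ : IsPartition μ) (hi : 1 ≤ i) (hj : 1 ≤ j) : i ≤ conj μ j ↔ j ≤ μ i := by
  obtain ⟨N, hN⟩ := hμ.2.2
  obtain ⟨k, hk, hk_pos, hk_succ⟩ : ∃ k, ¬(1 ≤ k ∧ μ k < j) ∧ 1 ≤ k + 1 ∧ μ (k + 1) < j :=
    Nat.exists_not_and_succ_of_not_zero_of_exists (p := fun k ↦ 1 ≤ k ∧ μ k < j) (by simp)
      ⟨N + 1, by omega, by rw [hN _ (by omega)]; exact hj⟩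
  have column_eq (m : ℕ) (hm : 1 ≤ m) : j ≤ μ m ↔ m ≤ k := by
    refine ⟨fun hjm ↦ ?_, fun hmk ↦ ?_⟩
    · by_contra! hkm
      have := hμ.antitoneOn hk_pos hm hkm
      omega
    · have := hμ.antitoneOn hm (hm.trans hmk) hmk
      omega
  rw [conj_eq_of_forall_le_iff column_eq, column_eq i hi]

theorem conj_eq (hμ : IsPartition μ) (hle : j ≤ μ i) (hlt : μ (i + 1) < j) : conj μ j = i := by
  have hi : 1 ≤ i := by
    by_contra! hi
    obtain rfl : i = 0 := by omega
    have := hμ.1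
    omega
  have le_conj := (hμ.le_conj_iff hi (by omega)).2 hle
  have conj_lt := (hμ.le_conj_iff (Nat.le_add_left 1 i) (by omega)).not.2 hlt.not_ge
  omega

theorem twoSingular_conj_iff (hμ : IsPartition μ) :
    TwoSingular (conj μ) ↔ ∃ i, 1 ≤ i ∧ μ (i + 1) + 2 ≤ μ i := by
  constructor
  · rintro ⟨j, hj, heq, hpos⟩
    have le_row := (hμ.le_conj_iff hpos (Nat.le_add_left 1 j)).1 heq.le
    have row_succ_lt := (hμ.le_conj_iff (Nat.le_add_left 1 _) hj).not.1 (conj μ j).lt_irrefl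
    exact ⟨conj μ j, hpos, by omega⟩
  · rintro ⟨i, hi, hdrop⟩
    have conj_first : conj μ (μ (i + 1) + 1) = i := hμ.conj_eq (by omega) (by omega)
    have conj_second : conj μ (μ (i + 1) + 1 + 1) = i := hμ.conj_eq (by omega) (by omega)
    exact ⟨μ (i + 1) + 1, by omega, by rw [conj_first, conj_second], by rwa [conj_first]⟩

end IsPartition

/-- The `i`-th beta-number of `μ`, normalised so that the empty partition has beta-numbers
`-1, -2, …`. -/
def betaNumber (μ : ℕ → ℕ) (i : ℕ) : ℤ := μ i - i

/-- The (infinite) beta-set of `μ`, i.e. the positions of the beads in its abacus display. -/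
def betaSet (μ : ℕ → ℕ) : Set ℤ := betaNumber μ '' Set.Ici 1

theorem betaNumber_mem_betaSet (μ : ℕ → ℕ) {i : ℕ} (hi : 1 ≤ i) : betaNumber μ i ∈ betaSet μ :=
  Set.mem_image_of_mem _ hi

namespace IsPartition

variable {μ : ℕ → ℕ} {i : ℕ} {y : ℤ}

theorem strictAntiOn_betaNumber (hμ : IsPartition μ) :
    StrictAntiOn (betaNumber μ) (Set.Ici 1) := by
  intro i hi j hj hij
  have := hμ.antitoneOn hi hj hij.le
  simp only [betaNumber]
  omega

theorem betaNumber_succ_eq (hμ : IsPartition μ) (hi : 1 ≤ i) (hy : y ∈ betaSet μ)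
    (hle : betaNumber μ (i + 1) ≤ y) (hlt : y < betaNumber μ i) : betaNumber μ (i + 1) = y := by
  obtain ⟨k, hk, rfl⟩ := hy
  have hik : i < k := (hμ.strictAntiOn_betaNumber.lt_iff_gt hk hi).1 hlt
  exact hle.antisymm (hμ.strictAntiOn_betaNumber.antitoneOn (Nat.le_add_left 1 i) hk hik)

theorem exists_betaNumber_succ_lt_lt (hμ : IsPartition μ) (hy : y ∉ betaSet μ)
    (hlt : y < betaNumber μ i) :
    ∃ m, i ≤ m ∧ betaNumber μ (m + 1) < y ∧ y < betaNumber μ m := by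
  obtain ⟨N, hN⟩ := hμ.2.2
  have eventually_lt : betaNumber μ (i + (N + y.natAbs + 1)) < y := by
    rw [betaNumber, hN _ (by omega)]
    omega
  obtain ⟨n, hn, hn_succ⟩ := Nat.exists_not_and_succ_of_not_zero_of_exists
    (p := fun n ↦ betaNumber μ (i + n) ≤ y) hlt.not_ge ⟨_, eventually_lt.le⟩
  refine ⟨i + n, Nat.le_add_right i n, hn_succ.lt_of_ne fun heq ↦ hy ?_, not_le.1 hn⟩
  exact heq ▸ betaNumber_mem_betaSet μ (Nat.le_add_left 1 _)

theorem exists_hook_eq (hμ : IsPartition μ) (hi : 1 ≤ i) (hy : y ∉ betaSet μ)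
    (hlt : y < betaNumber μ i) : ∃ j, IsNode μ i j ∧ hook μ i j = betaNumber μ i - y := by
  obtain ⟨m, him, hsucc_lt, hlt_m⟩ := hμ.exists_betaNumber_succ_lt_lt hy hlt
  have row_le : μ m ≤ μ i := hμ.antitoneOn hi (hi.trans him) him
  simp only [betaNumber] at hsucc_lt hlt_m ⊢
  obtain ⟨j, hj⟩ : ∃ j : ℕ, (j : ℤ) = y + m + 1 := ⟨(y + m + 1).toNat, by omega⟩
  have conj_eq_m : conj μ j = m := hμ.conj_eq (by omega) (by omega)
  refine ⟨j, ⟨hi, by omega, by omega⟩, ?_⟩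
  rw [hook, conj_eq_m]
  omega

theorem exists_succ_eq_of_add_one_mem_betaSet (hμ : IsPartition μ) (hi : 1 ≤ i)
    (hadd : betaNumber μ i + 1 ∈ betaSet μ) : ∃ k, 1 ≤ k ∧ k + 1 = i ∧ μ k = μ i := by
  obtain ⟨k, hk, hk_eq⟩ := hadd
  have succ_lt : betaNumber μ (k + 1) < betaNumber μ k :=
    hμ.strictAntiOn_betaNumber hk (Nat.le_add_left 1 k) k.lt_add_one
  have succ_eq : betaNumber μ (k + 1) = betaNumber μ i :=
    hμ.betaNumber_succ_eq hk (betaNumber_mem_betaSet μ hi) (by omega) (by omega)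
  obtain rfl : k + 1 = i := hμ.strictAntiOn_betaNumber.injOn (Nat.le_add_left 1 k) hi succ_eq
  simp only [betaNumber] at hk_eq
  exact ⟨k, hk, rfl, by omega⟩

end IsPartition

theorem IsECore.mem_betaSet_of_dvd_sub {e : ℕ} {μ : ℕ → ℕ} (hc : IsECore e μ)
    (hμ : IsPartition μ) {x y : ℤ} (hx : x ∈ betaSet μ) (hle : y ≤ x) (hdvd : (e : ℤ) ∣ x - y) :
    y ∈ betaSet μ := by
  by_contra hy
  obtain ⟨i, hi, rfl⟩ := hx
  have hlt : y < betaNumber μ i :=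
    hle.lt_of_ne fun h ↦ hy (h ▸ betaNumber_mem_betaSet μ hi)
  obtain ⟨j, hnode, hhook⟩ := hμ.exists_hook_eq hi hy hlt
  exact hc i j hnode (hhook ▸ hdvd)

theorem apply_eq_zero_of_not_broken {μ : ℕ → ℕ} (hb : ¬Broken μ) {c d : ℕ} (hc : 1 ≤ c)
    (hcd : c < d) (hdrop : μ (c + 1) + 2 ≤ μ c) (heq : μ d = μ (d + 1)) : μ d = 0 := by
  by_contra hne
  exact hb ⟨c + 1, d + 1, by omega, by omega, by rw [Nat.add_sub_cancel]; omega, heq, by omega⟩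

namespace IsECore

variable {d : ℕ} {μ : ℕ → ℕ} {i : ℕ}

theorem not_dvd_betaNumber_sub_of_drop (hc : IsECore (d + 2) μ) (hμ : IsPartition μ) (hi : 1 ≤ i)
    (hdrop : μ (i + 1) + d ≤ μ i) {y z : ℤ} (hz : z ∈ betaSet μ) (hyz : y ≤ z)
    (hle : betaNumber μ i - d ≤ y) (hlt : y < betaNumber μ i) : ¬(d + 2 : ℤ) ∣ z - y := by
  intro hdvd
  have hy : y ∈ betaSet μ := hc.mem_betaSet_of_dvd_sub hμ hz hyz (by exact_mod_cast hdvd)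
  have succ_lt : betaNumber μ (i + 1) < y := by
    simp only [betaNumber] at hle ⊢
    omega
  exact succ_lt.ne (hμ.betaNumber_succ_eq hi hy succ_lt.le hlt)

theorem betaNumber_add_one_mem_betaSet (hc : IsECore (d + 2) μ) (hμ : IsPartition μ) (hd : 1 ≤ d)
    (hi : 1 ≤ i) (hdrop : μ (i + 1) + d ≤ μ i) {z : ℤ} (hz : z ∈ betaSet μ)
    (hz' : z + 1 ∈ betaSet μ) (hle : betaNumber μ i ≤ z) : betaNumber μ i + 1 ∈ betaSet μ := by
  set x := betaNumber μ i
  have avoid {w y : ℤ} := hc.not_dvd_betaNumber_sub_of_drop hμ hi hdrop (y := y) (z := w)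
  set r := (z - x) % (d + 2)
  have hr_nonneg : 0 ≤ r := Int.emod_nonneg _ (by omega)
  have hr_lt : r < d + 2 := Int.emod_lt_of_pos _ (by omega)
  obtain ⟨q, hq⟩ : (d + 2 : ℤ) ∣ z - x - r := Int.dvd_self_sub_emod
  rcases hr_nonneg.eq_or_lt with hr0 | hr_pos
  · exact hc.mem_betaSet_of_dvd_sub hμ hz' (by omega) ⟨q, by push_cast; linarith⟩
  exfalso
  rcases (Int.add_one_le_iff.2 hr_pos).eq_or_lt with hr1 | hr2
  · refine avoid (y := x - d) hz' (by omega) le_rfl (by omega) ⟨q + 1, ?_⟩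
    linarith
  · refine avoid (y := x + r - (d + 2)) hz (by omega) (by omega) (by omega) ⟨q + 1, ?_⟩
    linarith

theorem apply_succ_of_drop (hc : IsECore (d + 2) μ) (hμ : IsPartition μ)
    (hi : 1 ≤ i) (hdrop : μ (i + 1) + d ≤ μ i) (hadd : betaNumber μ i + 1 ∈ betaSet μ) :
    μ (i + 1) + d = μ i ∧ μ (i + 1) = μ (i + 1 + 1) := by
  have first_mem : betaNumber μ i - d - 1 ∈ betaSet μ :=
    hc.mem_betaSet_of_dvd_sub hμ hadd (by omega) ⟨1, by push_cast; ring⟩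
  have second_mem : betaNumber μ i - d - 2 ∈ betaSet μ :=
    hc.mem_betaSet_of_dvd_sub hμ (betaNumber_mem_betaSet μ hi) (by omega) ⟨1, by push_cast; ring⟩
  have first_eq : betaNumber μ (i + 1) = betaNumber μ i - d - 1 :=
    hμ.betaNumber_succ_eq hi first_mem (by simp only [betaNumber]; omega) (by omega)
  have row_le := hμ.2.1 (i + 1) (by omega)
  have second_eq : betaNumber μ (i + 1 + 1) = betaNumber μ i - d - 2 :=
    hμ.betaNumber_succ_eq (by omega) second_mem
      (by simp only [betaNumber] at first_eq ⊢; omega) (by omega)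
  simp only [betaNumber] at first_eq second_eq
  omega

theorem add_le_of_mem_betaSet_of_add_two_le (hc : IsECore (d + 2) μ) (hμ : IsPartition μ)
    (hi : 1 ≤ i) (hdrop : μ (i + 1) + d ≤ μ i) {z : ℤ} (hz : z ∈ betaSet μ)
    (hle : betaNumber μ i + 2 ≤ z) : betaNumber μ i + (d + 2) ≤ z := by
  by_contra! hlt
  exact hc.not_dvd_betaNumber_sub_of_drop hμ hi hdrop (y := z - (d + 2)) hz (by omega) (by omega)
    (by omega) ⟨1, by ring⟩

theorem eq_two_and_apply_one_eq_of_drop (hc : IsECore (d + 2) μ) (hμ : IsPartition μ)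
    (hb : ¬Broken μ) (hd : 2 ≤ d) (hi : 1 ≤ i) (hdrop : μ (i + 1) + d ≤ μ i)
    (hadd : betaNumber μ i + 1 ∈ betaSet μ) : i = 2 ∧ μ 1 = μ 2 := by
  obtain ⟨k, hk, rfl, heq⟩ := hμ.exists_succ_eq_of_add_one_mem_betaSet hi hadd
  obtain rfl | ⟨l, hl, rfl⟩ : k = 1 ∨ ∃ l, 1 ≤ l ∧ k = l + 1 :=
    hk.eq_or_lt.imp Eq.symm fun hk ↦ ⟨k - 1, by omega, by omega⟩
  · exact ⟨rfl, heq⟩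
  have row_le : μ (l + 1) ≤ μ l := hμ.2.1 l hl
  have le_beta := hc.add_le_of_mem_betaSet_of_add_two_le hμ hi hdrop
    (betaNumber_mem_betaSet μ hl) (by simp only [betaNumber]; omega)
  have earlier_drop : μ (l + 1) + 2 ≤ μ l := by
    simp only [betaNumber] at le_beta
    omega
  have row_eq_zero : μ (l + 1) = 0 :=
    apply_eq_zero_of_not_broken hb hl l.lt_add_one earlier_drop heq
  omega

theorem eq_rectangle_of_drop (hc : IsECore (d + 2) μ) (hμ : IsPartition μ) (hb : ¬Broken μ)
    (hs : TwoSingular μ) (hd : 2 ≤ d) (hi : 1 ≤ i) (hdrop : μ (i + 1) + d ≤ μ i) :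
    μ 1 = d ∧ μ 2 = d ∧ ∀ k, 3 ≤ k → μ k = 0 := by
  obtain ⟨a, ha, haeq, hapos⟩ := hs
  have hai : a < i := by
    by_contra! hia
    rcases hia.eq_or_lt with rfl | hia
    · omega
    · exact hapos.ne' (apply_eq_zero_of_not_broken hb hi hia (by omega) haeq)
  have pred_mem : betaNumber μ a - 1 ∈ betaSet μ :=
    ⟨a + 1, Nat.le_add_left 1 a, by simp only [betaNumber]; omega⟩
  have pred_ge : betaNumber μ i ≤ betaNumber μ a - 1 :=
    Int.le_sub_one_of_lt (hμ.strictAntiOn_betaNumber ha hi hai)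
  have hadd : betaNumber μ i + 1 ∈ betaSet μ :=
    hc.betaNumber_add_one_mem_betaSet hμ (by omega) hi hdrop pred_mem
      (by simpa using betaNumber_mem_betaSet μ ha) pred_ge
  obtain ⟨rfl, first_eq_second⟩ := hc.eq_two_and_apply_one_eq_of_drop hμ hb hd hi hdrop hadd
  obtain ⟨drop_eq, third_eq_fourth⟩ : μ 3 + d = μ 2 ∧ μ 3 = μ 4 :=
    hc.apply_succ_of_drop hμ hi hdrop hadd
  have third_eq_zero : μ 3 = 0 :=
    apply_eq_zero_of_not_broken hb hi (Nat.lt_add_one 2) (by omega) third_eq_fourth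
  refine ⟨by omega, by omega, fun k hk ↦ Nat.eq_zero_of_le_zero ?_⟩
  exact third_eq_zero ▸ hμ.antitoneOn (by simp) (show 1 ≤ k by omega) hk

end IsECore

theorem not_broken_of_apply_eq_zero {μ : ℕ → ℕ} (h3 : ∀ k, 3 ≤ k → μ k = 0) : ¬Broken μ := by
  rintro ⟨c, d, hc, hcd, -, -, hpos⟩
  exact hpos.ne' (h3 d (by omega))

theorem isECore_of_eq_rectangle {d : ℕ} {μ : ℕ → ℕ} (hμ : IsPartition μ) (h1 : μ 1 = d)
    (h2 : μ 2 = d) (h3 : ∀ k, 3 ≤ k → μ k = 0) : IsECore (d + 2) μ := by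
  rintro i j ⟨hi, hj, hij⟩ hdvd
  have hi2 : i ≤ 2 := by
    by_contra! h
    have := h3 i h
    omega
  have row_eq : μ i = d := by
    interval_cases i
    · exact h1
    · exact h2
  have conj_eq_two : conj μ j = 2 := hμ.conj_eq (by omega) (by rw [h3 3 le_rfl]; exact hj)
  rw [hook, row_eq, conj_eq_two] at hdvd
  have := Int.le_of_dvd (by omega) hdvd
  omega

theorem four_core_classification_general {d : ℕ} (μ : ℕ → ℕ) (hμ : IsPartition μ) (hd : 2 ≤ d) :
    (TwoSingular μ ∧ (∃ i, 1 ≤ i ∧ μ (i + 1) + d ≤ μ i) ∧ ¬Broken μ ∧ IsECore (d + 2) μ) ↔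
      (μ 1 = d ∧ μ 2 = d ∧ ∀ i, 3 ≤ i → μ i = 0) := by
  constructor
  · rintro ⟨hs, ⟨i, hi, hdrop⟩, hb, hc⟩
    exact hc.eq_rectangle_of_drop hμ hb hs hd hi hdrop
  · rintro ⟨h1, h2, h3⟩
    have twoSingular : TwoSingular μ := ⟨1, le_rfl, h1.trans h2.symm, by omega⟩
    have drop : μ 3 + d ≤ μ 2 := by rw [h2, h3 3 le_rfl, zero_add]
    exact ⟨twoSingular, ⟨2, by simp, drop⟩, not_broken_of_apply_eq_zero h3,
      isECore_of_eq_rectangle hμ h1 h2 h3⟩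

/-- The only unbroken doubly-singular 4-core is the partition `(2,2)`. -/
theorem four_core_classification (μ : ℕ → ℕ) (hμ : IsPartition μ) :
    (TwoSingular μ ∧ TwoSingular (conj μ) ∧ ¬ Broken μ ∧ IsECore 4 μ) ↔
      (μ 1 = 2 ∧ μ 2 = 2 ∧ ∀ i, 3 ≤ i → μ i = 0) := by
  rw [hμ.twoSingular_conj_iff]
  exact four_core_classification_general μ hμ le_rfl
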